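/- arXiv:0708.3105 — 2 statements merged into one kernel-verified Lean document; each statement's English description precedes it below -/
import Mathlib

section
/- Let (A,m,k) be a Noetherian local ring of Krull dimension d and let I be an m-primary ideal of A. Then the A-module I/(I_> ∩ I) is annihilated by m (hence is a k-vector space), and dim_k I/(I_> ∩ I) ≥ d. -/
open Filter Polynomial

/-- An element `b` is weakly subintegral over a subset (subring) `R` of `B`:
there are `q ≥ 0` and `a_i ∈ R` (`1 ≤ i ≤ 2q+1`) with
`b^n + ∑_{i=1}^n (n choose i) a_i b^{n-i} = 0` for `q+1 ≤ n ≤ 2q+1`. -/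
def WSubOver {B : Type*} [CommRing B] (R : Set B) (b : B) : Prop :=
  ∃ q : ℕ, ∃ a : ℕ → B, (∀ i, a i ∈ R) ∧
    ∀ n, q + 1 ≤ n → n ≤ 2 * q + 1 →
      b ^ n + ∑ i ∈ Finset.Icc 1 n, (n.choose i : B) * a i * b ^ (n - i) = 0

/-- An element `b` is weakly subintegral over an ideal `I`:
there are `q ≥ 0` and `a_i ∈ I^i` with
`b^n + ∑_{i=1}^n (n choose i) a_i b^{n-i} = 0` for `q+1 ≤ n ≤ 2q+1`.
The set of such elements is the weak subintegral closure `*I`. -/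
def WSubIdeal {A : Type*} [CommRing A] (I : Ideal A) (b : A) : Prop :=
  ∃ q : ℕ, ∃ a : ℕ → A, (∀ i, a i ∈ I ^ i) ∧
    ∀ n, q + 1 ≤ n → n ≤ 2 * q + 1 →
      b ^ n + ∑ i ∈ Finset.Icc 1 n, (n.choose i : A) * a i * b ^ (n - i) = 0

/-- `a` is integral over the ideal `I`: `a^n + c_1 a^{n-1} + ⋯ + c_n = 0` with `c_i ∈ I^i`.
The set of such elements is the integral closure `Ī` of `I`. -/
def IntegralOverIdeal {A : Type*} [CommRing A] (I : Ideal A) (a : A) : Prop :=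
  ∃ n : ℕ, 0 < n ∧ ∃ c : ℕ → A, (∀ i, c i ∈ I ^ i) ∧
    a ^ n + ∑ i ∈ Finset.Icc 1 n, c i * a ^ (n - i) = 0

/-- `J` is a reduction of `I`: `J ⊆ I` and `J̄ = Ī`. -/
def IsReduction {A : Type*} [CommRing A] (J I : Ideal A) : Prop :=
  J ≤ I ∧ ∀ x, IntegralOverIdeal J x ↔ IntegralOverIdeal I x

/-- `J` is a minimal reduction of `I`. -/
def IsMinimalReduction {A : Type*} [CommRing A] (J I : Ideal A) : Prop :=
  IsReduction J I ∧ ∀ J' : Ideal A, IsReduction J' I → J' ≤ J → J' = J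

/-- `ord_I(a) = max {n | a ∈ I^n}` (with value `∞` if `a ∈ ⋂ I^n`). -/
noncomputable def ordI {A : Type*} [CommRing A] (I : Ideal A) (a : A) : ℕ∞ :=
  ⨆ (n : ℕ) (_ : a ∈ I ^ n), (n : ℕ∞)

/-- The sequence `ord_I(a^n)/n`, whose limit is the asymptotic Samuel function `v̄_I(a)`. -/
noncomputable def samuelSeq {A : Type*} [CommRing A] (I : Ideal A) (a : A) (n : ℕ) : ENNReal :=
  (ordI I (a ^ n) : ENNReal) / (n : ENNReal)

/-- `a ∈ I_>`, i.e. `v̄_I(a) > 1`, where `v̄_I(a)` is the limit of `ord_I(a^n)/n`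
(this limit always exists in `[0,∞]`). -/
def MemIgt {A : Type*} [CommRing A] (I : Ideal A) (a : A) : Prop :=
  ∃ L : ENNReal, 1 < L ∧ Filter.Tendsto (samuelSeq I a) Filter.atTop (nhds L)

/-- Fekete's lemma for superadditive sequences in `[0, ∞]`. -/
theorem tendsto_div_of_superadditive (u : ℕ → ENNReal) (hu : ∀ m n, u m + u n ≤ u (m + n)) :
    Tendsto (fun n ↦ u n / (n : ENNReal)) atTop
      (nhds (⨆ (n : ℕ) (_ : 0 < n), u n / (n : ENNReal))) := by
  have hmul : ∀ q n r : ℕ, q * u n ≤ u (n * q + r) := by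
    intro q n r
    induction q with
    | zero => simp
    | succ q ih =>
      calc ((q + 1 : ℕ) : ENNReal) * u n = q * u n + u n := by push_cast; ring
        _ ≤ u (n * q + r) + u n := by gcongr
        _ ≤ u (n * q + r + n) := hu _ _
        _ = u (n * (q + 1) + r) := by congr 1; ring
  refine tendsto_order.2 ⟨fun c hc ↦ ?_, fun b hb ↦ ?_⟩
  · simp only [lt_iSup_iff] at hc
    obtain ⟨n, hn, hc⟩ := hc
    obtain ⟨c', hcc', hc'⟩ := exists_between hc
    lift c' to NNReal using (hc'.trans_le le_top).ne
    lift c to NNReal using (hcc'.trans_le le_top).ne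
    have hlt : (c : ℝ) < c' := by exact_mod_cast hcc'
    obtain ⟨M, hM⟩ := exists_nat_gt ((n * c' : ℝ) / (c' - c))
    filter_upwards [eventually_ge_atTop (M + 1)] with m hm
    have hm0 : (m : ENNReal) ≠ 0 := by
      simp only [ne_eq, Nat.cast_eq_zero]; omega
    have hn0 : (n : ENNReal) ≠ 0 := by
      simp only [ne_eq, Nat.cast_eq_zero]; omega
    rw [ENNReal.lt_div_iff_mul_lt (Or.inl hm0) (Or.inl (ENNReal.natCast_ne_top m))]
    have hun : (c' : ENNReal) * n ≤ u n :=
      (ENNReal.le_div_iff_mul_le (Or.inl hn0) (Or.inl (ENNReal.natCast_ne_top n))).1 hc'.le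
    have key : (c : ENNReal) * m < (m / n : ℕ) * (c' * n) := by
      have h1 : (m : ℝ) < (m / n : ℕ) * n + n := by
        exact_mod_cast Nat.lt_div_mul_add hn
      have h2 : (M : ℝ) ≤ m := by exact_mod_cast (by omega : M ≤ m)
      rw [div_lt_iff₀ (by linarith)] at hM
      have h3 : (c : ℝ) * m < (m / n : ℕ) * (c' * n) := by
        nlinarith [mul_le_mul_of_nonneg_right h2 (by linarith : (0 : ℝ) ≤ c' - c),
          mul_le_mul_of_nonneg_left h1.le c'.coe_nonneg]
      exact_mod_cast h3
    calc (c : ENNReal) * m < (m / n : ℕ) * (c' * n) := key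
      _ ≤ (m / n : ℕ) * u n := by gcongr
      _ ≤ u (n * (m / n) + m % n) := hmul _ _ _
      _ = u m := by rw [Nat.div_add_mod]
  · filter_upwards [eventually_gt_atTop 0] with m hm
    exact (le_iSup₂ (f := fun (n : ℕ) (_ : 0 < n) ↦ u n / (n : ENNReal)) m hm).trans_lt hb

theorem le_ordI {A : Type*} [CommRing A] {I : Ideal A} {a : A} {n : ℕ} (h : a ∈ I ^ n) :
    (n : ℕ∞) ≤ ordI I a :=
  le_iSup₂ (f := fun (n : ℕ) (_ : a ∈ I ^ n) ↦ (n : ℕ∞)) n h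

theorem mem_pow_of_lt_ordI {A : Type*} [CommRing A] {I : Ideal A} {a : A} {n : ℕ}
    (h : (n : ℕ∞) < ordI I a) : a ∈ I ^ (n + 1) := by
  simp only [ordI, lt_iSup_iff] at h
  obtain ⟨m, hm, h⟩ := h
  exact Ideal.pow_le_pow_right (by exact_mod_cast h) hm

theorem ordI_add_le_ordI_mul {A : Type*} [CommRing A] (I : Ideal A) (a b : A) :
    ordI I a + ordI I b ≤ ordI I (a * b) := by
  have : Nonempty {n : ℕ // a ∈ I ^ n} := ⟨⟨0, by simp⟩⟩
  have : Nonempty {n : ℕ // b ∈ I ^ n} := ⟨⟨0, by simp⟩⟩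
  rw [ordI, ordI, iSup_subtype', iSup_subtype']
  refine ENat.iSup_add_iSup_le fun m n ↦ ?_
  exact_mod_cast le_ordI (pow_add I m.1 n.1 ▸ Ideal.mul_mem_mul m.2 n.2)

/-- `a ∈ I_>` if and only if some power `a ^ N`, with `N > 0`, lies in `I ^ (N + 1)`. -/
theorem memIgt_iff {A : Type*} [CommRing A] {I : Ideal A} {a : A} :
    MemIgt I a ↔ ∃ N, 0 < N ∧ a ^ N ∈ I ^ (N + 1) := by
  constructor
  · rintro ⟨L, hL, h⟩
    obtain ⟨n, hn, hn0⟩ := ((h.eventually_const_lt hL).and (eventually_gt_atTop 0)).exists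
    refine ⟨n, hn0, mem_pow_of_lt_ordI ?_⟩
    rw [samuelSeq, ENNReal.lt_div_iff_mul_lt (Or.inl (by simp; omega))
      (Or.inl (ENNReal.natCast_ne_top n)), one_mul] at hn
    exact_mod_cast hn
  · rintro ⟨N, hN, h⟩
    refine ⟨_, ?_, tendsto_div_of_superadditive (fun n ↦ (ordI I (a ^ n) : ENNReal)) ?_⟩
    · refine lt_of_lt_of_le ?_ (le_iSup₂ N hN)
      rw [ENNReal.lt_div_iff_mul_lt (Or.inl (by simp; omega))
        (Or.inl (ENNReal.natCast_ne_top N)), one_mul]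
      have := (Nat.cast_lt (α := ℕ∞).2 (Nat.lt_succ_self N)).trans_le (le_ordI h)
      exact_mod_cast this
    · intro m n
      have := ordI_add_le_ordI_mul I (a ^ m) (a ^ n)
      rw [← pow_add] at this
      exact_mod_cast this

theorem Ideal.sup_pow_le_of_forall_mul_le {A : Type*} [CommRing A] {K L P : Ideal A} {n : ℕ}
    (h : ∀ i ≤ n, K ^ i * L ^ (n - i) ≤ P) : (K ⊔ L) ^ n ≤ P := by
  rw [← Submodule.add_eq_sup, add_pow]
  refine Finset.sum_induction _ (· ≤ P) (fun _ _ ↦ sup_le) bot_le fun i hi ↦ ?_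
  exact Ideal.mul_le_left.trans (h i (Nat.lt_succ_iff.1 (Finset.mem_range.1 hi)))

/-- Ideals some power of which lies in the next power of `I` are closed under sums. -/
theorem exists_sup_pow_le_pow_succ {A : Type*} [CommRing A] {I K L : Ideal A}
    (hK : ∃ N, 0 < N ∧ K ^ N ≤ I ^ (N + 1)) (hL : ∃ N, 0 < N ∧ L ^ N ≤ I ^ (N + 1)) :
    ∃ N, 0 < N ∧ (K ⊔ L) ^ N ≤ I ^ (N + 1) := by
  have scale : ∀ {K : Ideal A} {N : ℕ} (k : ℕ), 0 < k → K ^ N ≤ I ^ (N + 1) →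
      K ^ (N * k) ≤ I ^ (N * k + 1) := by
    intro K N k hk h
    rw [pow_mul]
    refine (Ideal.pow_right_mono h k).trans ?_
    rw [← pow_mul]
    exact Ideal.pow_le_pow_right (by nlinarith)
  have floor : ∀ {K : Ideal A} {N : ℕ} (i : ℕ), K ^ N ≤ I ^ (N + 1) →
      K ^ i ≤ I ^ ((N + 1) * (i / N)) := by
    intro K N i h
    calc K ^ i ≤ K ^ (N * (i / N)) := Ideal.pow_le_pow_right (Nat.mul_div_le i N)
      _ = (K ^ N) ^ (i / N) := pow_mul _ _ _
      _ ≤ (I ^ (N + 1)) ^ (i / N) := Ideal.pow_right_mono h _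
      _ = I ^ ((N + 1) * (i / N)) := (pow_mul _ _ _).symm
  obtain ⟨N₁, h₁, hK⟩ := hK
  obtain ⟨N₂, h₂, hL⟩ := hL
  replace hK := scale N₂ h₂ hK
  replace hL := scale N₁ h₁ hL
  rw [mul_comm N₂] at hL
  have hN : 0 < N₁ * N₂ := Nat.mul_pos h₁ h₂
  generalize N₁ * N₂ = N at *
  refine ⟨N * (N + 2), by positivity, ?_⟩
  refine Ideal.sup_pow_le_of_forall_mul_le fun i hi ↦ ?_
  refine (Ideal.mul_mono (floor i hK) (floor _ hL)).trans ?_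
  rw [← pow_add]
  refine Ideal.pow_le_pow_right ?_
  have e₁ := Nat.lt_div_mul_add (a := i) hN
  have e₂ := Nat.lt_div_mul_add (a := N * (N + 2) - i) hN
  have : N + 1 ≤ i / N + (N * (N + 2) - i) / N := by
    by_contra! hlt
    have : (i / N + (N * (N + 2) - i) / N) * N ≤ N * N := by
      gcongr; omega
    have : N * (N + 2) = N * N + N + N := by ring
    rw [add_mul] at *
    omega
  nlinarith

/-- In a Noetherian ring, `I_>` is an ideal, and some power of it lies in the next power of `I`. -/
theorem exists_ideal_memIgt {A : Type*} [CommRing A] [IsNoetherianRing A] (I : Ideal A) :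
    ∃ K : Ideal A, (∀ a, MemIgt I a ↔ a ∈ K) ∧ ∃ N, 0 < N ∧ K ^ N ≤ I ^ (N + 1) := by
  obtain ⟨K, hK, hmax⟩ := set_has_maximal_iff_noetherian.2 (inferInstance : IsNoetherian A A)
    {K : Ideal A | ∃ N, 0 < N ∧ K ^ N ≤ I ^ (N + 1)} ⟨⊥, 1, one_pos, by simp⟩
  refine ⟨K, fun a ↦ ?_, hK⟩
  rw [memIgt_iff]
  constructor
  · rintro ⟨N, hN, h⟩
    have hspan : ∃ N, 0 < N ∧ Ideal.span {a} ^ N ≤ I ^ (N + 1) :=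
      ⟨N, hN, by rwa [Ideal.span_singleton_pow, Ideal.span_singleton_le_iff_mem]⟩
    have := hmax _ (exists_sup_pow_le_pow_succ hK hspan)
    have heq : K = K ⊔ Ideal.span {a} := eq_of_le_of_not_lt le_sup_left this
    rw [heq]
    exact Ideal.mem_sup_right (Ideal.mem_span_singleton_self a)
  · obtain ⟨N, hN, h⟩ := hK
    exact fun ha ↦ ⟨N, hN, h (Ideal.pow_mem_pow ha N)⟩

/-- If `I ≤ J ⊔ K` with `K ^ N ≤ I ^ (N + 1)`, then `I ^ N ≤ J`. -/
theorem pow_le_of_le_sup {A : Type*} [CommRing A] [IsNoetherianRing A] [IsLocalRing A]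
    {I J K : Ideal A} (hI : I ≤ IsLocalRing.maximalIdeal A) (h : I ≤ J ⊔ K) {N : ℕ}
    (hK : K ^ N ≤ I ^ (N + 1)) : I ^ N ≤ J := by
  refine Submodule.le_of_le_smul_of_le_jacobson_bot (I := IsLocalRing.maximalIdeal A)
    (IsNoetherian.noetherian _) (IsLocalRing.maximalIdeal_le_jacobson _) ?_
  calc I ^ N ≤ (J ⊔ K) ^ N := Ideal.pow_right_mono h N
    _ ≤ J ⊔ K ^ N := by
      refine Ideal.sup_pow_le_of_forall_mul_le fun i _ ↦ ?_
      rcases Nat.eq_zero_or_pos i with rfl | hi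
      · simp
      · exact (Ideal.mul_le_left.trans (Ideal.pow_le_self hi.ne')).trans le_sup_left
    _ ≤ J ⊔ IsLocalRing.maximalIdeal A • I ^ N := by
      refine sup_le_sup_left (hK.trans ?_) _
      rw [pow_succ', smul_eq_mul]
      exact Ideal.mul_mono_left hI

/-- Krull's height theorem for a finite set generating an ideal primary to the maximal ideal. -/
theorem le_card_of_radical_span_eq {A : Type*} [CommRing A] [IsNoetherianRing A] [IsLocalRing A]
    {d : ℕ} (hd : ringKrullDim A = d) (t : Finset A)
    (ht : (Ideal.span (t : Set A)).radical = IsLocalRing.maximalIdeal A) : d ≤ t.card := by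
  have hmin : IsLocalRing.maximalIdeal A ∈ (Ideal.span (t : Set A)).minimalPrimes := by
    refine ⟨⟨inferInstance, ht ▸ Ideal.le_radical⟩, fun p hp _ ↦ ?_⟩
    rw [← ht]
    exact hp.1.radical_le_iff.2 hp.2
  have h := Ideal.height_le_card_of_mem_minimalPrimes_span_finset hmin
  rw [← IsLocalRing.maximalIdeal_height_eq_ringKrullDim] at hd
  have hd' : (IsLocalRing.maximalIdeal A).height = d := by exact_mod_cast hd
  rw [hd'] at h
  exact_mod_cast h

/-- Observation in §4: let `(A,m,k)` be a Noetherian local ring of Krull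
dimension `d` and `I` an `m`-primary ideal.  Then the module `I/(I_> ∩ I)` is annihilated
by `m` (hence is a `k`-vector space) and its `k`-dimension is at least `d`, i.e. there are
`d` elements of `I` whose images in `I/(I_> ∩ I)` are `k`-linearly independent. -/
theorem quotient_by_igt_dim_ge {A : Type*} [CommRing A] [IsNoetherianRing A] [IsLocalRing A]
    (d : ℕ) (hd : ringKrullDim A = d)
    (I : Ideal A) (hI : I.radical = IsLocalRing.maximalIdeal A) :
    (∀ x ∈ IsLocalRing.maximalIdeal A, ∀ a ∈ I, MemIgt I (x * a) ∧ x * a ∈ I) ∧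
    (∃ a : Fin d → A, (∀ i, a i ∈ I) ∧
      ∀ c : Fin d → A, MemIgt I (∑ i, c i * a i) →
        ∀ i, c i ∈ IsLocalRing.maximalIdeal A) := by
  obtain ⟨K, hK, N, hN, hKN⟩ := exists_ideal_memIgt I
  have hIm : I ≤ IsLocalRing.maximalIdeal A := hI ▸ Ideal.le_radical
  refine ⟨fun x hx a ha ↦ ⟨?_, I.mul_mem_left x ha⟩, ?_⟩
  · rw [← hI] at hx
    obtain ⟨k, hk⟩ := hx
    refine memIgt_iff.2 ⟨k + 1, k.succ_pos, ?_⟩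
    rw [mul_pow, pow_succ' I, pow_succ x]
    exact Ideal.mul_mem_mul (I.mul_mem_right _ hk) (Ideal.pow_mem_pow ha _)
  · classical
    have hex : ∃ n, ∃ t : Finset A, t.card = n ∧ (t : Set A) ⊆ I ∧
        I ≤ Ideal.span (t : Set A) ⊔ K := by
      obtain ⟨t, ht⟩ := IsNoetherian.noetherian I
      exact ⟨_, t, rfl, ht ▸ Ideal.subset_span, ht ▸ le_sup_left⟩
    obtain ⟨t, hcard, htI, hle⟩ := Nat.find_spec hex
    have hrad : (Ideal.span (t : Set A)).radical = IsLocalRing.maximalIdeal A := by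
      rw [← hI]
      refine le_antisymm (Ideal.radical_mono (Ideal.span_le.2 htI)) ?_
      rw [← Ideal.radical_pow I hN.ne']
      exact Ideal.radical_mono (pow_le_of_le_sup hIm hle hKN)
    have hdt : Fintype.card (Fin d) ≤ Fintype.card t := by
      simpa using le_card_of_radical_span_eq hd t hrad
    obtain ⟨e⟩ := Function.Embedding.nonempty_of_card_le hdt
    refine ⟨fun i ↦ e i, fun i ↦ htI (e i).2, fun c hc j ↦ ?_⟩
    rw [hK] at hc
    by_contra hj
    rw [IsLocalRing.mem_maximalIdeal, mem_nonunits_iff, not_not] at hj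
    have hne : ∀ i, i ≠ j → (e i : A) ≠ e j := fun i hij h ↦ hij (e.injective (Subtype.ext h))
    have hmem : (e j : A) ∈ Ideal.span (t.erase (e j) : Set A) ⊔ K := by
      rw [← Ideal.unit_mul_mem_iff_mem _ hj]
      rw [← Finset.add_sum_erase _ _ (Finset.mem_univ j)] at hc
      rw [← add_sub_cancel_right (c j * (e j : A)) (∑ i ∈ Finset.univ.erase j, c i * (e i : A))]
      refine sub_mem (Ideal.mem_sup_right hc) (Ideal.mem_sup_left (sum_mem fun i hi ↦ ?_))
      exact Ideal.mul_mem_left _ _ (Ideal.subset_span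
        (by simpa using hne i (Finset.ne_of_mem_erase hi)))
    refine Nat.find_min hex (m := (t.erase (e j)).card) ?_
      ⟨_, rfl, fun x hx ↦ htI (Finset.mem_of_mem_erase hx), hle.trans (sup_le ?_ le_sup_right)⟩
    · rw [← hcard]
      exact Finset.card_erase_lt_of_mem (e j).2
    · refine Ideal.span_le.2 fun x hx ↦ ?_
      by_cases hxe : x = e j
      · exact hxe ▸ hmem
      · exact Ideal.mem_sup_left (Ideal.subset_span (Finset.mem_erase.2 ⟨hxe, hx⟩))
end

section
/- Let (A,m,k) be a Noetherian local ring of Krull dimension d whose residue field k is algebraically closed of characteristic 0, and let I be an m-primary integrally closed ideal (I = Ī). If dim_k(I/I_>) = d, then *J = I for every reduction J of I. -/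
open Filter Polynomial

section PowersInFamilies

variable {A : Type*} [CommRing A]

/-- If `I * F n ≤ F (n + 1)` for all `n`, then `I ^ k * F n ≤ F (n + k)` for all `n` and `k`. -/
theorem Ideal.pow_mul_le_of_mul_le {I : Ideal A} {F : ℕ → Ideal A}
    (hF : ∀ n, I * F n ≤ F (n + 1)) (n k : ℕ) : I ^ k * F n ≤ F (n + k) := by
  induction k with
  | zero => simp
  | succ k ih =>
    calc I ^ (k + 1) * F n = I * (I ^ k * F n) := by rw [pow_succ', mul_assoc]
      _ ≤ I * F (n + k) := Ideal.mul_mono_right ih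
      _ ≤ F (n + (k + 1)) := hF _

/-- If an ideal `K ≤ I` is finitely generated, `F` is a family of ideals with
`I * F n ≤ F (n + 1)`, and every element of `K` has a power `x ^ n` in `F n`, then some power
`K ^ n` is contained in `F n`. -/
theorem Ideal.exists_pow_le_of_forall_exists_pow_mem {I K : Ideal A} (hK : K.FG) (hKI : K ≤ I)
    {F : ℕ → Ideal A} (hF : ∀ n, I * F n ≤ F (n + 1)) (h : ∀ x ∈ K, ∃ n, x ^ n ∈ F n) :
    ∃ n, K ^ n ≤ F n := by
  induction K, hK using Submodule.fg_induction with
  | singleton x =>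
    obtain ⟨n, hn⟩ := h x (Submodule.mem_span_singleton_self x)
    refine ⟨n, ?_⟩
    change (Ideal.span {x}) ^ n ≤ F n
    rwa [Ideal.span_singleton_pow, Ideal.span_singleton_le_iff_mem]
  | sup K₁ K₂ _ _ h₁ h₂ =>
    have hK₁ : K₁ ≤ I := le_sup_left.trans hKI
    have hK₂ : K₂ ≤ I := le_sup_right.trans hKI
    obtain ⟨n, hn⟩ := h₁ hK₁ fun x hx => h x (Submodule.mem_sup_left hx)
    obtain ⟨m, hm⟩ := h₂ hK₂ fun x hx => h x (Submodule.mem_sup_right hx)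
    refine ⟨n + m, ?_⟩
    change ((K₁ : Ideal A) + K₂) ^ (n + m) ≤ _
    rw [add_pow, Ideal.sum_eq_sup, Finset.sup_le_iff]
    intro i hi
    rw [Finset.mem_range] at hi
    refine Ideal.mul_le_left.trans ?_
    rcases le_or_gt n i with hni | hni
    · calc K₁ ^ i * K₂ ^ (n + m - i)
          = (K₁ ^ (i - n) * K₂ ^ (n + m - i)) * K₁ ^ n := by
            rw [mul_right_comm, ← pow_add, Nat.sub_add_cancel hni]
        _ ≤ (I ^ (i - n) * I ^ (n + m - i)) * F n :=
            Ideal.mul_mono (Ideal.mul_mono (Ideal.pow_right_mono hK₁ _)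
              (Ideal.pow_right_mono hK₂ _)) hn
        _ = I ^ m * F n := by rw [← pow_add]; congr 2; omega
        _ ≤ F (n + m) := Ideal.pow_mul_le_of_mul_le hF n m
    · calc K₁ ^ i * K₂ ^ (n + m - i)
          = (K₁ ^ i * K₂ ^ (n - i)) * K₂ ^ m := by
            rw [mul_assoc, ← pow_add]; congr 2; omega
        _ ≤ (I ^ i * I ^ (n - i)) * F m :=
            Ideal.mul_mono (Ideal.mul_mono (Ideal.pow_right_mono hK₁ _)
              (Ideal.pow_right_mono hK₂ _)) hm
        _ = I ^ n * F m := by rw [← pow_add]; congr 2; omega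
        _ ≤ F (n + m) := by rw [add_comm]; exact Ideal.pow_mul_le_of_mul_le hF m n

end PowersInFamilies

section IntegralOverIdeal

variable {A : Type*} [CommRing A]

theorem IntegralOverIdeal.of_mem {I : Ideal A} {x : A} (hx : x ∈ I) : IntegralOverIdeal I x := by
  refine ⟨1, one_pos, fun i => if i = 1 then -x else 0, fun i => ?_, by simp⟩
  dsimp only
  split_ifs with h
  · simpa [h] using hx
  · exact zero_mem _

theorem IntegralOverIdeal.mono {J I : Ideal A} (h : J ≤ I) {x : A}
    (hx : IntegralOverIdeal J x) : IntegralOverIdeal I x := by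
  obtain ⟨n, hn, c, hc, hx⟩ := hx
  exact ⟨n, hn, c, fun i => Ideal.pow_right_mono h i (hc i), hx⟩

theorem WSubIdeal.integralOverIdeal {J : Ideal A} {x : A} (hx : WSubIdeal J x) :
    IntegralOverIdeal J x := by
  obtain ⟨q, a, ha, h⟩ := hx
  exact ⟨q + 1, q.succ_pos, fun i => ((q + 1).choose i : A) * a i,
    fun i => Ideal.mul_mem_left _ _ (ha i), h (q + 1) le_rfl (by omega)⟩

/-- If `x ∈ I` is integral over `J ≤ I`, then `x ^ n ∈ J * I ^ (n - 1)` for some `n`. -/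
theorem IntegralOverIdeal.exists_pow_mem {J I : Ideal A} (hJI : J ≤ I) {x : A} (hxI : x ∈ I)
    (hx : IntegralOverIdeal J x) : ∃ n, x ^ n ∈ J * I ^ (n - 1) := by
  obtain ⟨n, -, c, hc, hx⟩ := hx
  refine ⟨n, ?_⟩
  rw [eq_neg_of_add_eq_zero_left hx]
  refine neg_mem (Ideal.sum_mem _ fun i hi => ?_)
  rw [Finset.mem_Icc] at hi
  have hle : J ^ i * I ^ (n - i) ≤ J * I ^ (n - 1) := by
    calc J ^ i * I ^ (n - i) = J * (J ^ (i - 1) * I ^ (n - i)) := by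
          rw [← mul_assoc, ← pow_succ', Nat.sub_add_cancel hi.1]
      _ ≤ J * (I ^ (i - 1) * I ^ (n - i)) :=
          Ideal.mul_mono_right (Ideal.mul_mono_left (Ideal.pow_right_mono hJI _))
      _ = J * I ^ (n - 1) := by rw [← pow_add]; congr 2; omega
  exact hle (Ideal.mul_mem_mul (hc i) (Ideal.pow_mem_pow hxI _))

/-- A reduction `J` of a finitely generated ideal `I` satisfies `I ^ (n + k) ≤ J ^ k * I ^ n`
for some `n` and all `k`. -/
theorem IsReduction.exists_pow_add_le {J I : Ideal A} (hI : I.FG) (h : IsReduction J I) :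
    ∃ n, ∀ k, I ^ (n + k) ≤ J ^ k * I ^ n := by
  have hF : ∀ n, I * (J * I ^ (n - 1)) ≤ J * I ^ (n + 1 - 1) := by
    intro n
    rw [mul_left_comm, ← pow_succ']
    exact Ideal.mul_mono_right (Ideal.pow_le_pow_right (by omega))
  obtain ⟨n, hn⟩ := Ideal.exists_pow_le_of_forall_exists_pow_mem hI le_rfl hF fun x hx =>
    ((h.2 x).2 (.of_mem hx)).exists_pow_mem h.1 hx
  refine ⟨n, fun k => ?_⟩
  have hstep : I ^ (n + 1) ≤ J * I ^ n := by
    rw [pow_succ']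
    exact (Ideal.mul_mono_right hn).trans (hF n)
  induction k with
  | zero => simp
  | succ k ih =>
    calc I ^ (n + (k + 1)) = I * I ^ (n + k) := by rw [← add_assoc, pow_succ']
      _ ≤ I * (J ^ k * I ^ n) := Ideal.mul_mono_right ih
      _ = J ^ k * I ^ (n + 1) := by rw [mul_left_comm, ← pow_succ']
      _ ≤ J ^ k * (J * I ^ n) := Ideal.mul_mono_right hstep
      _ = J ^ (k + 1) * I ^ n := by rw [pow_succ, mul_assoc]

end IntegralOverIdeal

section WeakSubintegrality

variable {A : Type*} [CommRing A]

theorem add_sum_Icc_choose_mul_eq_sum_range (f : ℕ → A) (c : A) (n : ℕ) (hf : f 0 = 1) :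
    c ^ n + ∑ i ∈ Finset.Icc 1 n, (n.choose i : A) * f i * c ^ (n - i) =
      ∑ i ∈ Finset.range (n + 1), (n.choose i : A) * f i * c ^ (n - i) := by
  rw [Finset.range_eq_Ico, Finset.sum_eq_sum_Ico_succ_bot n.succ_pos]
  simp only [Nat.choose_zero_right, Nat.cast_one, one_mul, hf, Nat.sub_zero]
  rfl

/-- Translating a weakly subintegral element by an element of the ideal. -/
theorem WSubIdeal.add_mem {J : Ideal A} {y z : A} (hz : WSubIdeal J z) (hy : y ∈ J) :
    WSubIdeal J (z + y) := by
  obtain ⟨q, a, ha, h⟩ := hz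
  let a' : ℕ → A := fun i => if i = 0 then 1 else a i
  have ha' : ∀ i, a' i ∈ J ^ i := by
    intro i
    rcases i.eq_zero_or_pos with rfl | hi
    · simp
    · simpa [a', hi.ne'] using ha i
  let L : A[X] →ₗ[A] A := Polynomial.lsum fun i => LinearMap.toSpanSingleton A A (a' i)
  have hL : ∀ c i, L (C c * X ^ i) = c * a' i := by
    intro c i
    simp [L, Polynomial.lsum_apply, Polynomial.C_mul_X_pow_eq_monomial]
  have expand : ∀ c n, L ((X + C c) ^ n) =
      ∑ i ∈ Finset.range (n + 1), (n.choose i : A) * a' i * c ^ (n - i) := by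
    intro c n
    rw [add_pow, map_sum]
    refine Finset.sum_congr rfl fun i _ => ?_
    rw [show (X : A[X]) ^ i * C c ^ (n - i) * (n.choose i : A[X])
      = C (c ^ (n - i) * (n.choose i : A)) * X ^ i by simp; ring, hL]
    ring
  refine ⟨q, fun i => L ((X + C (-y)) ^ i), fun i => ?_, fun n hn hn' => ?_⟩
  · dsimp only
    rw [expand]
    refine Ideal.sum_mem _ fun j hj => ?_
    rw [mul_assoc]
    refine Ideal.mul_mem_left _ _ ?_
    rw [← pow_mul_pow_sub J (Finset.mem_range_succ_iff.1 hj)]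
    exact Ideal.mul_mem_mul (ha' j) (Ideal.pow_mem_pow (neg_mem hy) _)
  · rw [add_sum_Icc_choose_mul_eq_sum_range _ _ _ (by rw [expand]; simp [a'])]
    calc _ = L ((X + C (-y) + C (z + y)) ^ n) := by
          rw [add_pow (X + C (-y)), map_sum]
          refine Finset.sum_congr rfl fun i _ => ?_
          rw [show (X + C (-y)) ^ i * C (z + y) ^ (n - i) * (n.choose i : A[X])
            = ((n.choose i : A) * (z + y) ^ (n - i)) • (X + C (-y)) ^ i by
              rw [Polynomial.smul_eq_C_mul]; simp; ring, map_smul, smul_eq_mul]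
          ring
      _ = L ((X + C z) ^ n) := by rw [add_assoc, ← C_add]; congr 4; ring
      _ = 0 := by
          rw [expand, ← add_sum_Icc_choose_mul_eq_sum_range _ _ _ (by simp [a']), ← h n hn hn']
          congr 1
          refine Finset.sum_congr rfl fun i hi => ?_
          rw [Finset.mem_Icc] at hi
          simp [a', show i ≠ 0 by omega]

theorem sum_neg_one_pow_mul_choose_mul_choose {n k : ℕ} (h : k < n) :
    ∑ i ∈ Finset.range (n + 1), (-1 : ℤ) ^ i * n.choose i * i.choose k = 0 := by
  have := fwdDiff_iter_choose_zero k n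
  rw [if_neg h.ne', fwdDiff_iter_eq_sum_shift] at this
  calc _ = (-1) ^ n * ∑ i ∈ Finset.range (n + 1),
        ((-1 : ℤ) ^ (n - i) * n.choose i) • (((0 + i • 1 : ℕ).choose k : ℕ) : ℤ) := by
        rw [Finset.mul_sum]
        refine Finset.sum_congr rfl fun i hi => ?_
        obtain ⟨j, rfl⟩ := Nat.exists_eq_add_of_le (Finset.mem_range_succ_iff.1 hi)
        have : ((-1 : ℤ) ^ j) * (-1) ^ j = 1 := by rw [← mul_pow]; simp
        simp only [Nat.add_sub_cancel_left, smul_eq_mul, mul_one, zero_add, pow_add]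
        linear_combination (-(-1 : ℤ) ^ i * (i + j).choose i * i.choose k) * this
    _ = 0 := by rw [this, mul_zero]

/-- An element whose large powers `z ^ n` lie in `J ^ n` is weakly subintegral over `J`. -/
theorem WSubIdeal.of_forall_pow_mem {J : Ideal A} {z : A} {q : ℕ}
    (h : ∀ n, q < n → z ^ n ∈ J ^ n) : WSubIdeal J z := by
  let P : ℕ → ℤ := fun i => (-1) ^ i * ∑ k ∈ Finset.range (q + 1), (-1) ^ k * (i.choose k : ℤ)
  have hP0 : P 0 = 1 := by simp [P, Finset.sum_range_succ']
  have hPz : ∀ i, 0 < i → i ≤ q → P i = 0 := by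
    intro i hi hiq
    obtain ⟨i, rfl⟩ := Nat.exists_eq_succ_of_ne_zero hi.ne'
    simp only [P, Nat.succ_eq_add_one]
    rw [Int.alternating_sum_range_choose_eq_choose, Nat.choose_eq_zero_of_lt (by omega)]
    simp
  refine ⟨q, fun i => (P i : A) * z ^ i, fun i => ?_, fun n hn _ => ?_⟩
  · rcases i.eq_zero_or_pos with rfl | hi
    · simp
    · rcases le_or_gt i q with hiq | hiq
      · simp [hPz i hi hiq]
      · exact Ideal.mul_mem_left _ _ (h i hiq)
  · have key : ∑ i ∈ Finset.range (n + 1), (n.choose i : ℤ) * P i = 0 := by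
      simp only [P, Finset.mul_sum]
      rw [Finset.sum_comm]
      refine Finset.sum_eq_zero fun k hk => ?_
      rw [Finset.mem_range] at hk
      have := sum_neg_one_pow_mul_choose_mul_choose (n := n) (k := k) (by omega)
      calc _ = (-1) ^ k * ∑ i ∈ Finset.range (n + 1), (-1 : ℤ) ^ i * n.choose i * i.choose k := by
            rw [Finset.mul_sum]
            exact Finset.sum_congr rfl fun i _ => by ring
        _ = 0 := by rw [this, mul_zero]
    rw [add_sum_Icc_choose_mul_eq_sum_range _ _ _ (by simp [hP0])]
    calc _ = ((∑ i ∈ Finset.range (n + 1), (n.choose i : ℤ) * P i : ℤ) : A) * z ^ n := by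
          push_cast
          rw [Finset.sum_mul]
          refine Finset.sum_congr rfl fun i hi => ?_
          rw [← pow_mul_pow_sub z (Finset.mem_range_succ_iff.1 hi)]
          ring
      _ = 0 := by rw [key]; simp

end WeakSubintegrality

section PositiveExcess

variable {A : Type*} [CommRing A]

/-- The ideal of those `z ∈ I` with `z ^ r ∈ I ^ (r + 1)` for some `r`, i.e. the elements of `I`
whose class in degree one of the associated graded ring of `I` is nilpotent. -/
def Ideal.excess (I : Ideal A) : Ideal A where
  carrier := {z | z ∈ I ∧ ∃ r, z ^ r ∈ I ^ (r + 1)}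
  zero_mem' := ⟨I.zero_mem, 1, by simp⟩
  add_mem' := by
    rintro z w ⟨hz, r, hr⟩ ⟨hw, s, hs⟩
    refine ⟨I.add_mem hz hw, r + s, ?_⟩
    rw [add_pow]
    refine Ideal.sum_mem _ fun i hi => Ideal.mul_mem_right _ _ ?_
    rw [Finset.mem_range] at hi
    rcases le_or_gt r i with h | h
    · obtain ⟨k, rfl⟩ := Nat.exists_eq_add_of_le h
      rw [pow_add z, mul_assoc]
      have := Ideal.mul_mem_mul hr
        (Ideal.mul_mem_mul (Ideal.pow_mem_pow hz k) (Ideal.pow_mem_pow hw (r + s - (r + k))))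
      rw [← pow_add, ← pow_add] at this
      convert this using 2
      omega
    · obtain ⟨k, rfl⟩ := Nat.exists_eq_add_of_le h.le
      have := Ideal.mul_mem_mul (Ideal.pow_mem_pow hz i)
        (Ideal.mul_mem_mul (Ideal.pow_mem_pow hw k) hs)
      rw [← pow_add, ← pow_add, ← pow_add] at this
      rw [show i + k + s - i = k + s by omega]
      convert this using 2
      omega
  smul_mem' := by
    rintro c z ⟨hz, r, hr⟩
    refine ⟨I.mul_mem_left c hz, r, ?_⟩
    rw [smul_eq_mul, mul_pow]
    exact Ideal.mul_mem_left _ _ hr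

theorem Ideal.mem_excess {I : Ideal A} {z : A} :
    z ∈ I.excess ↔ z ∈ I ∧ ∃ r, z ^ r ∈ I ^ (r + 1) := Iff.rfl

theorem Ideal.excess_le (I : Ideal A) : I.excess ≤ I := fun _ h => h.1

theorem Ideal.radical_mul_le_excess (I : Ideal A) : I.radical * I ≤ I.excess := by
  rw [Ideal.mul_le]
  rintro c ⟨k, hk⟩ z hz
  refine ⟨I.mul_mem_left c hz, k, ?_⟩
  rw [mul_pow, pow_succ']
  exact Ideal.mul_mem_mul hk (Ideal.pow_mem_pow hz k)

theorem MemIgt.mem_excess {I : Ideal A} {z : A} (h : MemIgt I z) (hz : z ∈ I) : z ∈ I.excess := by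
  obtain ⟨L, hL, hlim⟩ := h
  obtain ⟨r, hr, hr0⟩ := ((hlim.eventually (lt_mem_nhds hL)).and (eventually_gt_atTop 0)).exists
  refine ⟨hz, r, ?_⟩
  have hlt : (r : ℕ∞) < ordI I (z ^ r) := by
    rw [samuelSeq, ENNReal.lt_div_iff_mul_lt (by simp [hr0.ne']) (by simp), one_mul] at hr
    exact_mod_cast hr
  rw [ordI, lt_iSup_iff] at hlt
  obtain ⟨m, hm⟩ := hlt
  obtain ⟨hmem, hm⟩ := lt_iSup_iff.1 hm
  exact Ideal.pow_le_pow_right (Nat.succ_le_of_lt (by exact_mod_cast hm)) hmem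

theorem Ideal.exists_excess_pow_le [IsNoetherianRing A] (I : Ideal A) :
    ∃ n, I.excess ^ n ≤ I ^ (n + 1) := by
  refine Ideal.exists_pow_le_of_forall_exists_pow_mem (F := fun n => I ^ (n + 1))
    (IsNoetherian.noetherian _) I.excess_le (fun n => ?_) fun x hx => (Ideal.mem_excess.1 hx).2
  rw [← pow_succ']

theorem Ideal.sup_pow_le_sup_pow (B K : Ideal A) (n : ℕ) : (B ⊔ K) ^ n ≤ B ⊔ K ^ n := by
  induction n with
  | zero => simp
  | succ n ih =>
    calc (B ⊔ K) ^ (n + 1) = (B ⊔ K) ^ n * (B ⊔ K) := pow_succ _ _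
      _ ≤ (B ⊔ K ^ n) * (B ⊔ K) := Ideal.mul_mono_left ih
      _ = (B ⊔ K ^ n) * B ⊔ (B * K ⊔ K ^ n * K) := by rw [Ideal.mul_sup, Ideal.sup_mul _ _ K]
      _ ≤ B ⊔ K ^ (n + 1) :=
          sup_le (Ideal.mul_le_right.trans le_sup_left)
            (sup_le_sup Ideal.mul_le_left (pow_succ K n).ge)

theorem IsReduction.wSubIdeal_of_mem_excess [IsNoetherianRing A] {J I : Ideal A}
    (h : IsReduction J I) {z : A} (hz : z ∈ I.excess) : WSubIdeal J z := by
  obtain ⟨n₀, hn₀⟩ := h.exists_pow_add_le (IsNoetherian.noetherian I)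
  obtain ⟨hzI, r, hr⟩ := hz
  refine WSubIdeal.of_forall_pow_mem (q := r * n₀) fun n hn => ?_
  obtain ⟨k, rfl⟩ := Nat.exists_eq_add_of_le hn.le
  have hmem : z ^ (r * n₀ + k) ∈ I ^ (n₀ + (r * n₀ + k)) := by
    have := Ideal.mul_mem_mul (Ideal.pow_mem_pow hr n₀) (Ideal.pow_mem_pow hzI k)
    rw [← pow_mul, ← pow_add, ← pow_mul, ← pow_add] at this
    convert this using 2
    ring
  exact Ideal.mul_le_left (hn₀ _ hmem)

/-- In a Noetherian local ring, if a reduction of a proper ideal `I` is contained in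
`B + I.excess`, then `B` contains a power of `I`. -/
theorem IsReduction.exists_pow_le_of_le_sup_excess [IsNoetherianRing A] [IsLocalRing A]
    {J I B : Ideal A} (hI : I ≤ IsLocalRing.maximalIdeal A) (h : IsReduction J I)
    (hJ : J ≤ B ⊔ I.excess) : ∃ n, I ^ n ≤ B := by
  obtain ⟨n, hn⟩ := h.exists_pow_add_le (IsNoetherian.noetherian I)
  obtain ⟨M, hM⟩ := I.exists_excess_pow_le
  have hJM : J ^ M ≤ B ⊔ I ^ (M + 1) :=
    (Ideal.pow_right_mono hJ M).trans
      ((Ideal.sup_pow_le_sup_pow B _ M).trans (sup_le_sup_left hM B))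
  refine ⟨n + M, Submodule.le_of_le_smul_of_le_jacobson_bot (I := I) (IsNoetherian.noetherian _)
    (hI.trans (IsLocalRing.maximalIdeal_le_jacobson _)) ?_⟩
  calc I ^ (n + M) ≤ J ^ M * I ^ n := hn M
    _ ≤ (B ⊔ I ^ (M + 1)) * I ^ n := Ideal.mul_mono_left hJM
    _ = B * I ^ n ⊔ I ^ (M + 1) * I ^ n := Ideal.sup_mul _ _ _
    _ ≤ B ⊔ I • I ^ (n + M) := by
        refine sup_le_sup Ideal.mul_le_left (le_of_eq ?_)
        rw [smul_eq_mul, ← pow_add, ← pow_succ']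
        congr 1
        omega

theorem IsLocalRing.ringKrullDim_le_of_pow_le_span [IsNoetherianRing A] [IsLocalRing A]
    {I : Ideal A} (hI : I.radical = maximalIdeal A) {e : ℕ} {b : Fin e → A}
    (hb : ∀ i, b i ∈ I) {n : ℕ} (hn : I ^ n ≤ Ideal.span (Set.range b)) :
    ringKrullDim A ≤ e := by
  have hBm : Ideal.span (Set.range b) ≤ maximalIdeal A := by
    rw [Ideal.span_le, ← hI]
    rintro _ ⟨i, rfl⟩
    exact Ideal.le_radical (hb i)
  have hmin : maximalIdeal A ∈ (Ideal.span (Set.range b)).minimalPrimes := by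
    refine ⟨⟨inferInstance, hBm⟩, fun p hp _ => ?_⟩
    have := hp.1
    rw [← hI, hp.1.radical_le_iff]
    exact hp.1.le_of_pow_le (hn.trans hp.2)
  rw [← maximalIdeal_height_eq_ringKrullDim]
  have hcard : (Set.range b).ncard ≤ e := by
    simpa using Finite.card_range_le b
  have := (Ideal.height_le_card_of_mem_minimalPrimes_span (Set.finite_range b) hmin).trans
    (Nat.cast_le.2 hcard)
  exact_mod_cast this

end PositiveExcess

/-- If a family of `d` elements of `I` spans `I` modulo `I.excess`, where `d` is the dimension of
the ring, then any reduction `J` of `I` also spans `I` modulo `I.excess`. -/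
theorem IsReduction.le_sup_excess {A : Type*} [CommRing A] [IsNoetherianRing A] [IsLocalRing A]
    {d : ℕ} (hd : ringKrullDim A = d) {I J : Ideal A}
    (hI : I.radical = IsLocalRing.maximalIdeal A) (hJ : IsReduction J I)
    {a : Fin d → A} (ha : ∀ i, a i ∈ I)
    (hspan : ∀ b ∈ I, ∃ c : Fin d → A, b - ∑ i, c i * a i ∈ I.excess) :
    I ≤ J ⊔ I.excess := by
  let N : Submodule A I := Submodule.comap I.subtype I.excess
  have htors : Module.IsTorsionBySet A (I ⧸ N) (IsLocalRing.maximalIdeal A) := by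
    rintro x ⟨c, hc⟩
    obtain ⟨x, rfl⟩ := N.mkQ_surjective x
    change c • N.mkQ x = 0
    rw [← map_smul, Submodule.mkQ_apply, Submodule.Quotient.mk_eq_zero]
    exact I.radical_mul_le_excess (Ideal.mul_mem_mul (hI ▸ hc) x.2)
  let : Field (A ⧸ IsLocalRing.maximalIdeal A) := Ideal.Quotient.field _
  let : Module (A ⧸ IsLocalRing.maximalIdeal A) (I ⧸ N) := htors.module
  have hsmul : ∀ (c : A) (x : I),
      Ideal.Quotient.mk (IsLocalRing.maximalIdeal A) c • N.mkQ x = N.mkQ (c • x) := by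
    intro c x
    rw [map_smul]
    rfl
  -- Membership in the span of finitely many classes, expressed in the ring.
  have hmem : ∀ {e : ℕ} (b : Fin e → I) (x : I),
      N.mkQ x ∈ Submodule.span (A ⧸ IsLocalRing.maximalIdeal A) (Set.range (N.mkQ ∘ b)) ↔
        ∃ c : Fin e → A, (x : A) - ∑ i, c i * b i ∈ I.excess := by
    intro e b x
    have hiff : ∀ c : Fin e → A,
        ∑ i, Ideal.Quotient.mk (IsLocalRing.maximalIdeal A) (c i) • (N.mkQ ∘ b) i = N.mkQ x ↔
          (x : A) - ∑ i, c i * b i ∈ I.excess := by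
      intro c
      simp only [Function.comp_apply, hsmul]
      rw [← map_sum, eq_comm, ← sub_eq_zero, ← map_sub, Submodule.mkQ_apply,
        Submodule.Quotient.mk_eq_zero]
      simp [N]
    rw [Submodule.mem_span_range_iff_exists_fun]
    constructor
    · rintro ⟨c, hc⟩
      choose c' hc' using fun i => Ideal.Quotient.mk_surjective (c i)
      exact ⟨c', (hiff c').1 (by simpa only [hc'] using hc)⟩
    · rintro ⟨c, hc⟩
      exact ⟨_, (hiff c).2 hc⟩
  have htop : Submodule.span (A ⧸ IsLocalRing.maximalIdeal A)
      (Set.range (N.mkQ ∘ fun i => (⟨a i, ha i⟩ : I))) = ⊤ := by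
    rw [eq_top_iff]
    rintro x -
    obtain ⟨x, rfl⟩ := N.mkQ_surjective x
    exact (hmem _ x).2 (hspan x x.2)
  have hfin : Module.Finite (A ⧸ IsLocalRing.maximalIdeal A) (I ⧸ N) :=
    ⟨Submodule.fg_def.2 ⟨_, Set.finite_range _, htop⟩⟩
  have hrank : Module.finrank (A ⧸ IsLocalRing.maximalIdeal A) (I ⧸ N) ≤ d := by
    simpa using finrank_le_of_span_eq_top htop
  obtain ⟨f, hf, hfspan, -⟩ := Submodule.exists_fun_fin_finrank_span_eq
    (A ⧸ IsLocalRing.maximalIdeal A) (N.mkQ '' {x : I | (x : A) ∈ J})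
  choose b hbJ hbf using hf
  obtain rfl : N.mkQ ∘ b = f := funext hbf
  let B : Ideal A := Ideal.span (Set.range fun i => (b i : A))
  have hsumB : ∀ c : Fin _ → A, ∑ i, c i * (b i : A) ∈ B := fun c =>
    Ideal.sum_mem _ fun i _ => Ideal.mul_mem_left _ _ (Ideal.subset_span ⟨i, rfl⟩)
  have hsup : ∀ x : I, N.mkQ x ∈ Submodule.span (A ⧸ IsLocalRing.maximalIdeal A)
      (N.mkQ '' {x : I | (x : A) ∈ J}) → (x : A) ∈ B ⊔ I.excess := by
    intro x hx
    rw [← hfspan] at hx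
    obtain ⟨c, hc⟩ := (hmem b x).1 hx
    rw [← add_sub_cancel (∑ i, c i * (b i : A)) (x : A)]
    exact Submodule.add_mem_sup (hsumB c) hc
  have hJB : J ≤ B ⊔ I.excess := fun x hx =>
    hsup ⟨x, hJ.1 hx⟩ (Submodule.subset_span ⟨_, hx, rfl⟩)
  have hBJ : B ≤ J := Ideal.span_le.2 (by rintro _ ⟨i, rfl⟩; exact hbJ i)
  obtain ⟨n, hn⟩ := hJ.exists_pow_le_of_le_sup_excess (hI ▸ Ideal.le_radical) hJB
  have hdim := IsLocalRing.ringKrullDim_le_of_pow_le_span hI (fun i => (b i).2) hn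
  rw [hd, Nat.cast_le] at hdim
  have hspanJ : Submodule.span (A ⧸ IsLocalRing.maximalIdeal A)
      (N.mkQ '' {x : I | (x : A) ∈ J}) = ⊤ :=
    Submodule.eq_top_of_finrank_eq (le_antisymm (Submodule.finrank_le _) (hrank.trans hdim))
  exact fun x hx => sup_le_sup_right hBJ _ (hsup ⟨x, hx⟩ (hspanJ ▸ Submodule.mem_top))

/-- Corollary 4.15(1): let `(A,m,k)` be a Noetherian local ring of Krull
dimension `d` with `k` algebraically closed of characteristic 0, and let `I` be an
`m`-primary integrally closed ideal.  If `dim_k(I/I_>) = d` (expressed by the existence of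
`d` elements of `I` whose images form a `k`-basis of `I/I_>`), then `*J = I` for every
reduction `J` of `I`. -/
theorem weakSubintegralClosure_eq_of_dim_eq {A : Type*} [CommRing A] [IsNoetherianRing A]
    [IsLocalRing A]
    [IsAlgClosed (IsLocalRing.ResidueField A)] [CharZero (IsLocalRing.ResidueField A)]
    (d : ℕ) (hd : ringKrullDim A = d)
    (I : Ideal A) (hIm : I.radical = IsLocalRing.maximalIdeal A)
    (hIcl : ∀ x : A, IntegralOverIdeal I x → x ∈ I)
    (a : Fin d → A) (ha : ∀ i, a i ∈ I)
    (hind : ∀ c : Fin d → A, MemIgt I (∑ i, c i * a i) →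
      ∀ i, c i ∈ IsLocalRing.maximalIdeal A)
    (hspan : ∀ b ∈ I, ∃ c : Fin d → A, MemIgt I (b - ∑ i, c i * a i)) :
    ∀ J : Ideal A, IsReduction J I → ∀ x : A, WSubIdeal J x ↔ x ∈ I := by
  intro J hJ x
  refine ⟨fun hx => hIcl x (hx.integralOverIdeal.mono hJ.1), fun hx => ?_⟩
  have hle : I ≤ J ⊔ I.excess :=
    hJ.le_sup_excess hd hIm ha fun b hb => by
      obtain ⟨c, hc⟩ := hspan b hb
      exact ⟨c, hc.mem_excess
        (sub_mem hb (Ideal.sum_mem _ fun i _ => Ideal.mul_mem_left _ _ (ha i)))⟩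
  obtain ⟨y, hy, z, hz, rfl⟩ := Submodule.mem_sup.1 (hle hx)
  rw [add_comm]
  exact (hJ.wSubIdeal_of_mem_excess hz).add_mem hy
end
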